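/- arXiv:2004.06351 — 3 statements merged into one kernel-verified Lean document; each statement's English description precedes it below -/
import Mathlib

section
/- Let G : ℝ³ → Matrix 2 2 ℂ be smooth with G(x) ∈ SU(2) for all x and G(0) = I, and define the frame e_j^α(x) := (1/2)·tr( s_j · G(x)* · s^α · G(x) ) (this is the rotation of the standard constant frame by G). Define the flat Weitzenböck coefficients Υ^α_{βγ}(x) := Σ_j e_j^α(x)·∂e_j^γ/∂x^β(x), torsion T^α_{βγ} := Υ^α_{βγ} − Υ^α_{γβ}, contorsion K_{αβγ} := (1/2)(T_{αβγ} + T_{βαγ} + T_{γαβ}), and dual *K_{αβ}(x) := (1/2)·Σ_{μ,ν} K_{μαν}(x)·ε_{μνβ}. Then for all α, β ∈ {1,2,3}: ∂²G/∂x^α∂x^β(0) = −(i/4)·Σ_μ ( ∂(*K_{βμ})/∂x^α(0) + ∂(*K_{αμ})/∂x^β(0) )·s^μ − (1/4)·( Σ_μ *K_{αμ}(0)·*K_{βμ}(0) )·I. -/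
open Matrix

noncomputable section

/-- The three Pauli matrices. -/
def pauli : Fin 3 → Matrix (Fin 2) (Fin 2) ℂ
  | 0 => !![0, 1; 1, 0]
  | 1 => !![0, -Complex.I; Complex.I, 0]
  | 2 => !![1, 0; 0, -1]

/-- The Levi-Civita symbol with `ε 0 1 2 = 1`. -/
def eps (i j k : Fin 3) : ℝ :=
  ((j.val : ℝ) - (i.val : ℝ)) * ((k.val : ℝ) - (j.val : ℝ)) * ((k.val : ℝ) - (i.val : ℝ)) / 2

/-- Partial derivative in the direction `x^β` of a real-valued function on `ℝ³`. -/
def pdR (β : Fin 3) (g : (Fin 3 → ℝ) → ℝ) (x : Fin 3 → ℝ) : ℝ :=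
  fderiv ℝ g x (Pi.single β 1)

/-- Partial derivative in the direction `x^β` of a complex-valued function on `ℝ³`. -/
def pdC (β : Fin 3) (g : (Fin 3 → ℝ) → ℂ) (x : Fin 3 → ℝ) : ℂ :=
  fderiv ℝ g x (Pi.single β 1)

/-- Flat Weitzenböck coefficients `Υ[f]^α_{βγ}(x) = Σ_j f_j^α(x) ∂f_j^γ/∂x^β (x)`. -/
def weitz (f : (Fin 3 → ℝ) → Fin 3 → Fin 3 → ℝ) (x : Fin 3 → ℝ) (a b c : Fin 3) : ℝ :=
  ∑ j, f x j a * pdR b (fun y => f y j c) x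

/-- Torsion `T[f]^α_{βγ} = Υ[f]^α_{βγ} − Υ[f]^α_{γβ}`. -/
def weitzTorsion (f : (Fin 3 → ℝ) → Fin 3 → Fin 3 → ℝ) (x : Fin 3 → ℝ) (a b c : Fin 3) : ℝ :=
  weitz f x a b c - weitz f x a c b

/-- Contorsion `K[f]_{αβγ} = (1/2)(T_{αβγ} + T_{βαγ} + T_{γαβ})`. -/
def weitzContorsion (f : (Fin 3 → ℝ) → Fin 3 → Fin 3 → ℝ) (x : Fin 3 → ℝ) (a b c : Fin 3) : ℝ :=
  (weitzTorsion f x a b c + weitzTorsion f x b a c + weitzTorsion f x c a b) / 2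

/-- Hodge dual of the contorsion: `*K[f]_{αβ} = (1/2) Σ_{μν} K[f]_{μαν} ε_{μνβ}`. -/
def weitzDualContorsion (f : (Fin 3 → ℝ) → Fin 3 → Fin 3 → ℝ) (x : Fin 3 → ℝ) (a b : Fin 3) : ℝ :=
  (∑ μ, ∑ ν, weitzContorsion f x μ a ν * eps μ ν b) / 2


/-!
The right-invariant Maurer–Cartan form `B_β = (∂_β G) G*` takes values in `𝔰𝔲(2)`. Differentiating
the frame gives `Υ^α_{βγ} = ½ tr ([s^α, s^γ] B_β)`, which is antisymmetric in `α, γ`; hence the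
contorsion is `Υ` itself, and contracting with `ε` yields `*K_{βμ} = i tr (s^μ B_β)`. So
`B_β = -(i/2) ∑_μ *K_{βμ} s^μ`, that is, `∂_β G = -(i/2) ∑_μ *K_{βμ} s^μ G` at every point.
Differentiating `∂_β G = B_β G` once more and symmetrizing in `α, β` leaves half of
`∂_α B_β + ∂_β B_α` plus half the anticommutator of `B_α` and `B_β`, which is a scalar by the
Clifford relations.
-/

section MaurerCartan

variable {E A : Type*} [NormedAddCommGroup E] [NormedSpace ℝ E] [NormedRing A] [NormedAlgebra ℝ A]
  [StarRing A] {U : E → A} {x : E}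

/-- The right-invariant Maurer–Cartan form `dU · U⁻¹` pulled back along `U : E → A`, evaluated on
the vector `v` at `x`. The inverse is written as `star`, so this is meant for unitary-valued `U`. -/
def maurerCartan (U : E → A) (v x : E) : A :=
  fderiv ℝ U x v * star (U x)

theorem fderiv_eq_maurerCartan_mul (hU : U x ∈ unitary A) (v : E) :
    fderiv ℝ U x v = maurerCartan U v x * U x := by
  rw [maurerCartan, mul_assoc, Unitary.star_mul_self_of_mem hU, mul_one]

theorem fderiv_fderiv_eq_maurerCartan_mul (hU : ∀ y, U y ∈ unitary A) {u : E}
    (hUx : DifferentiableAt ℝ U x) (hBx : DifferentiableAt ℝ (maurerCartan U u) x) (v : E) :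
    fderiv ℝ (fun y => fderiv ℝ U y u) x v =
      (fderiv ℝ (maurerCartan U u) x v + maurerCartan U u x * maurerCartan U v x) * U x := by
  simp only [fderiv_eq_maurerCartan_mul (hU _) u]
  rw [fderiv_fun_mul' hBx hUx]
  simp only [_root_.add_apply, _root_.smul_apply, smul_eq_mul,
    MulOpposite.smul_eq_mul_unop, MulOpposite.unop_op, fderiv_eq_maurerCartan_mul (hU x) v]
  noncomm_ring

variable [StarModule ℝ A] [ContinuousStar A]

theorem differentiable_maurerCartan (hU : ContDiff ℝ 2 U) (v : E) :
    Differentiable ℝ (maurerCartan U v) := by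
  have hfderiv : Differentiable ℝ (fderiv ℝ U) :=
    (hU.fderiv_right (m := 1) (by norm_num)).differentiable (by norm_num)
  exact (hfderiv.clm_apply (differentiable_const v)).mul (hU.differentiable (by norm_num)).star

theorem star_maurerCartan (hU : ∀ y, U y ∈ unitary A) (hUx : DifferentiableAt ℝ U x) (v : E) :
    star (maurerCartan U v x) = -maurerCartan U v x := by
  have hconst : fderiv ℝ (fun y => U y * star (U y)) x v = 0 := by
    simp [Unitary.mul_star_self_of_mem (hU _)]
  rw [fderiv_fun_mul' hUx hUx.star] at hconst
  simp only [fderiv_star, _root_.add_apply, _root_.smul_apply, ContinuousLinearMap.comp_apply,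
    ContinuousLinearEquiv.coe_coe, starL'_apply, smul_eq_mul, MulOpposite.smul_eq_mul_unop,
    MulOpposite.unop_op] at hconst
  rw [maurerCartan, star_mul, star_star]
  exact eq_neg_of_add_eq_zero_left hconst

theorem fderiv_star_mul_mul (hU : ∀ y, U y ∈ unitary A) (hUx : DifferentiableAt ℝ U x)
    (a : A) (v : E) :
    fderiv ℝ (fun y => star (U y) * a * U y) x v =
      star (U x) * ⁅a, maurerCartan U v x⁆ * U x := by
  have hstar : star (fderiv ℝ U x v) = -(star (U x) * maurerCartan U v x) := by
    rw [fderiv_eq_maurerCartan_mul (hU x), star_mul, star_maurerCartan hU hUx, mul_neg]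
  rw [fderiv_fun_mul' (hUx.star.mul_const a) hUx, fderiv_mul_const' hUx.star]
  simp only [fderiv_star, _root_.add_apply, _root_.smul_apply, ContinuousLinearMap.comp_apply,
    ContinuousLinearEquiv.coe_coe, starL'_apply, smul_eq_mul, MulOpposite.smul_eq_mul_unop,
    MulOpposite.unop_op, hstar]
  rw [fderiv_eq_maurerCartan_mul (hU x), Ring.lie_def]
  noncomm_ring

theorem fderiv_fderiv_eq_symmetrized_maurerCartan_mul (hU : ∀ y, U y ∈ unitary A)
    (hU2 : ContDiff ℝ 2 U) (x u v : E) :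
    fderiv ℝ (fun y => fderiv ℝ U y u) x v =
      (2⁻¹ : ℝ) • (fderiv ℝ (maurerCartan U u) x v + fderiv ℝ (maurerCartan U v) x u +
        (maurerCartan U v x * maurerCartan U u x + maurerCartan U u x * maurerCartan U v x)) *
          U x := by
  have hUx : DifferentiableAt ℝ U x := hU2.differentiable (by norm_num) x
  have hsecond := fun w z => fderiv_fderiv_eq_maurerCartan_mul hU hUx
    (differentiable_maurerCartan hU2 w x) z
  have hsymm : fderiv ℝ (fun y => fderiv ℝ U y u) x v = fderiv ℝ (fun y => fderiv ℝ U y v) x u := by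
    have hfderiv : DifferentiableAt ℝ (fderiv ℝ U) x :=
      (hU2.fderiv_right (m := 1) (by norm_num)).differentiable (by norm_num) x
    rw [fderiv_clm_apply hfderiv (differentiableAt_const u),
      fderiv_clm_apply hfderiv (differentiableAt_const v)]
    simpa using hU2.contDiffAt.isSymmSndFDerivAt (by simp) v u
  calc
    _ = (2⁻¹ : ℝ) • (fderiv ℝ (fun y => fderiv ℝ U y u) x v +
          fderiv ℝ (fun y => fderiv ℝ U y v) x u) := by rw [← hsymm]; module
    _ = _ := by
      rw [hsecond u v, hsecond v u, ← add_mul, smul_mul_assoc]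
      congr 2
      abel

end MaurerCartan

section MatrixCalculus

open scoped Matrix.Norms.L2Operator

variable {E m n : Type*} [NormedAddCommGroup E] [NormedSpace ℝ E] {x : E}

theorem fderiv_entry [Finite m] [Finite n] {M : E → Matrix m n ℂ} (hM : DifferentiableAt ℝ M x)
    (i : m) (j : n) (v : E) :
    fderiv ℝ (fun y => M y i j) x v = fderiv ℝ M x v i j := by
  classical
  cases nonempty_fintype m
  cases nonempty_fintype n
  exact congr($(((entryLinearMap ℝ ℂ i j).toContinuousLinearMap.hasFDerivAt.comp x
    hM.hasFDerivAt).fderiv) v)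

variable [Fintype n]

theorem fderiv_trace {M : E → Matrix n n ℂ} (hM : DifferentiableAt ℝ M x) (v : E) :
    fderiv ℝ (fun y => trace (M y)) x v = trace (fderiv ℝ M x v) := by
  classical
  exact congr($(((traceLinearMap n ℝ ℂ).toContinuousLinearMap.hasFDerivAt.comp x
    hM.hasFDerivAt).fderiv) v)

theorem ofReal_fderiv_eq_of_eq_trace {M : E → Matrix n n ℂ} (hM : DifferentiableAt ℝ M x)
    {f : E → ℝ} {c : ℂ} {N : Matrix n n ℂ} (hf : ∀ y, (f y : ℂ) = c * trace (N * M y)) (v : E) :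
    ((fderiv ℝ f x v : ℝ) : ℂ) = c * trace (N * fderiv ℝ M x v) := by
  classical
  let L : Matrix n n ℂ →L[ℝ] ℂ :=
    (LinearMap.mulLeft ℝ c ∘ₗ traceLinearMap n ℝ ℂ ∘ₗ LinearMap.mulLeft ℝ N).toContinuousLinearMap
  have hLM : HasFDerivAt (fun y => (f y : ℂ)) (L ∘L fderiv ℝ M x) x := by
    simp only [hf]
    exact L.hasFDerivAt.comp x hM.hasFDerivAt
  have hf_diff : DifferentiableAt ℝ f x :=
    (Complex.reCLM.hasFDerivAt.comp x hLM).differentiableAt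
  exact congr($((Complex.ofRealCLM.hasFDerivAt.comp x hf_diff.hasFDerivAt).unique hLM) v)

variable [DecidableEq n]

theorem contDiff_of_contDiff_entries [Fintype m] {k : WithTop ℕ∞} {M : E → Matrix m n ℂ}
    (hM : ∀ i j, ContDiff ℝ k fun y => M y i j) : ContDiff ℝ k M :=
  (ofLinearEquiv (m := m) (n := n) (α := ℂ) ℝ).toLinearMap.toContinuousLinearMap.contDiff.comp
    (contDiff_pi.2 fun i => contDiff_pi.2 (hM i))

theorem fderiv_det {M : E → Matrix n n ℂ} (hM : DifferentiableAt ℝ M x) (v : E) :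
    fderiv ℝ (fun y => det (M y)) x v = trace (fderiv ℝ M x v * adjugate (M x)) := by
  let detCLM : ContinuousMultilinearMap ℝ (fun _ : n => n → ℂ) ℂ :=
    ⟨(detRowAlternating (R := ℂ) (n := n)).toMultilinearMap.restrictScalars ℝ,
      Continuous.matrix_det (A := fun M : Matrix n n ℂ => M) continuous_id⟩
  let rowCLM (i : n) : Matrix n n ℂ →L[ℝ] (n → ℂ) :=
    (LinearMap.proj (φ := fun _ => n → ℂ) i ∘ₗ
      (ofLinearEquiv ℝ).symm.toLinearMap).toContinuousLinearMap
  have hdet := HasFDerivAt.multilinear_comp detCLM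
    fun i => (rowCLM i).hasFDerivAt.comp x hM.hasFDerivAt
  calc
    _ = ∑ i, ((M x).updateRow i (fderiv ℝ M x v i)).det := by
      refine congr($(hdet.fderiv) v).trans ?_
      simp only [Function.comp_apply, _root_.sum_apply, ContinuousLinearMap.comp_apply,
        ContinuousMultilinearMap.toContinuousLinearMap_apply]
      rfl
    _ = _ := by
      simp only [← cramer_transpose_apply, cramer_eq_adjugate_mulVec, ← adjugate_transpose]
      simp only [trace, diag, mul_apply, mulVec, dotProduct, transpose_apply, mul_comm]

theorem trace_star_mul_mul {U : Matrix n n ℂ} (hU : U ∈ unitaryGroup n ℂ) (M : Matrix n n ℂ) :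
    trace (star U * M * U) = trace M := by
  rw [trace_mul_comm, ← mul_assoc, mem_unitaryGroup_iff.1 hU, one_mul]

theorem star_eq_adjugate_of_mem_specialUnitaryGroup {U : Matrix n n ℂ}
    (hU : U ∈ specialUnitaryGroup n ℂ) : star U = adjugate U := by
  obtain ⟨hunitary, hdet⟩ := mem_specialUnitaryGroup_iff.1 hU
  calc
    star U = adjugate U * U * star U := by rw [adjugate_mul, hdet, one_smul, one_mul]
    _ = adjugate U := by rw [mul_assoc, mem_unitaryGroup_iff.1 hunitary, mul_one]

theorem trace_maurerCartan_eq_zero {U : E → Matrix n n ℂ}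
    (hU : ∀ y, U y ∈ specialUnitaryGroup n ℂ) (hUx : DifferentiableAt ℝ U x) (v : E) :
    trace (maurerCartan U v x) = 0 := by
  rw [maurerCartan, star_eq_adjugate_of_mem_specialUnitaryGroup (hU x), ← fderiv_det hUx]
  simp [(mem_specialUnitaryGroup_iff.1 (hU _)).2]

end MatrixCalculus

section PauliAlgebra

variable (M N : Matrix (Fin 2) (Fin 2) ℂ)

theorem trace_pauli (j : Fin 3) : trace (pauli j) = 0 := by
  fin_cases j <;> simp [pauli, trace_fin_two]

theorem sum_trace_pauli_mul_smul_pauli :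
    ∑ j, trace (pauli j * M) • pauli j = (2 : ℂ) • M - trace M • 1 := by
  ext i j
  fin_cases i <;> fin_cases j <;>
    simp [Fin.sum_univ_three, pauli, trace_fin_two, mul_apply, Fin.sum_univ_two] <;>
    ring_nf <;> simp <;> ring

theorem sum_trace_pauli_mul_mul_trace_pauli_mul :
    ∑ j, trace (pauli j * M) * trace (pauli j * N) = 2 * trace (M * N) - trace M * trace N := by
  have h := congr(trace ($(sum_trace_pauli_mul_smul_pauli M) * N))
  simpa [Finset.sum_mul, sub_mul, trace_sum] using h

theorem eq_sum_pauli_of_trace_eq_zero {M : Matrix (Fin 2) (Fin 2) ℂ} (hM : trace M = 0) :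
    M = (-Complex.I / 2) • ∑ j, (Complex.I * trace (pauli j * M)) • pauli j := by
  have h := sum_trace_pauli_mul_smul_pauli M
  simp only [mul_smul, ← Finset.smul_sum, h, hM]
  simp [smul_smul, div_mul_eq_mul_div, ← mul_assoc]

theorem sum_eps_smul_commutator_pauli (k : Fin 3) :
    ∑ i, ∑ j, (eps i j k : ℂ) • ⁅pauli i, pauli j⁆ = (4 * Complex.I) • pauli k := by
  ext i j
  fin_cases k <;> fin_cases i <;> fin_cases j <;>
    simp [Fin.sum_univ_three, eps, pauli, Ring.lie_def] <;> ring_nf <;> simp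

theorem anticommutator_sum_smul_pauli (a b : Fin 3 → ℂ) :
    (∑ j, a j • pauli j) * (∑ j, b j • pauli j) + (∑ j, b j • pauli j) * (∑ j, a j • pauli j) =
      (2 * ∑ j, a j * b j) • 1 := by
  ext i j
  fin_cases i <;> fin_cases j <;>
    simp [Fin.sum_univ_three, pauli] <;>
    ring_nf <;> simp

end PauliAlgebra

section Weitzenbock

open scoped Matrix.Norms.L2Operator

theorem weitzContorsion_eq_weitz {f : (Fin 3 → ℝ) → Fin 3 → Fin 3 → ℝ} {x : Fin 3 → ℝ}
    (hf : ∀ a b c, weitz f x a b c = -weitz f x c b a) (a b c : Fin 3) :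
    weitzContorsion f x a b c = weitz f x a b c := by
  simp only [weitzContorsion, weitzTorsion]
  linarith [hf a b c, hf a c b, hf b a c]

/-- `e` is the rotation of the standard frame of `ℝ³` by the gauge transformation `G`; `e x j α` is
the `α`-th component of the `j`-th frame vector at `x`. -/
def IsRotatedFrame (G : (Fin 3 → ℝ) → Matrix (Fin 2) (Fin 2) ℂ)
    (e : (Fin 3 → ℝ) → Fin 3 → Fin 3 → ℝ) : Prop :=
  ∀ x j α, (e x j α : ℂ) = 2⁻¹ * trace (pauli j * (G x)ᴴ * pauli α * G x)

variable {G : (Fin 3 → ℝ) → Matrix (Fin 2) (Fin 2) ℂ} {e : (Fin 3 → ℝ) → Fin 3 → Fin 3 → ℝ}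
  {x : Fin 3 → ℝ}

theorem IsRotatedFrame.ofReal_eq (he : IsRotatedFrame G e) (x : Fin 3 → ℝ) (j α : Fin 3) :
    (e x j α : ℂ) = 2⁻¹ * trace (pauli j * (star (G x) * pauli α * G x)) := by
  rw [he, star_eq_conjTranspose]
  simp only [mul_assoc]

theorem IsRotatedFrame.ofReal_pdR (he : IsRotatedFrame G e)
    (hG : ∀ y, G y ∈ unitaryGroup (Fin 2) ℂ) (hGx : DifferentiableAt ℝ G x) (β j α : Fin 3) :
    (pdR β (fun y => e y j α) x : ℂ) =
      2⁻¹ * trace (pauli j * (star (G x) * ⁅pauli α, maurerCartan G (Pi.single β 1) x⁆ * G x)) := by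
  rw [← fderiv_star_mul_mul hG hGx]
  exact ofReal_fderiv_eq_of_eq_trace ((hGx.star.mul_const _).mul hGx)
    (fun y => he.ofReal_eq y j α) _

theorem IsRotatedFrame.ofReal_weitz (he : IsRotatedFrame G e)
    (hG : ∀ y, G y ∈ unitaryGroup (Fin 2) ℂ) (hGx : DifferentiableAt ℝ G x) (α β γ : Fin 3) :
    (weitz e x α β γ : ℂ) =
      2⁻¹ * trace (⁅pauli α, pauli γ⁆ * maurerCartan G (Pi.single β 1) x) := by
  set B := maurerCartan G (Pi.single β 1) x
  have hconj : star (G x) * pauli α * G x * (star (G x) * ⁅pauli γ, B⁆ * G x) =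
      star (G x) * (pauli α * ⁅pauli γ, B⁆) * G x := by
    simp only [mul_assoc, ← mul_assoc (G x) (star (G x)), mem_unitaryGroup_iff.1 (hG x), one_mul]
  calc
    (weitz e x α β γ : ℂ)
      = 4⁻¹ * ∑ j, trace (pauli j * (star (G x) * pauli α * G x)) *
          trace (pauli j * (star (G x) * ⁅pauli γ, B⁆ * G x)) := by
        simp only [weitz, Complex.ofReal_sum, Complex.ofReal_mul, he.ofReal_eq,
          he.ofReal_pdR hG hGx, Finset.mul_sum]
        exact Finset.sum_congr rfl fun j _ => by ring
    _ = 2⁻¹ * trace (pauli α * ⁅pauli γ, B⁆) := by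
        rw [sum_trace_pauli_mul_mul_trace_pauli_mul, hconj]
        simp only [trace_star_mul_mul (hG x), trace_pauli]
        ring
    _ = 2⁻¹ * trace (⁅pauli α, pauli γ⁆ * B) := by
        simp only [Ring.lie_def, mul_sub, sub_mul, trace_sub, ← mul_assoc,
          trace_mul_cycle (pauli α) B]

theorem IsRotatedFrame.ofReal_weitzDualContorsion (he : IsRotatedFrame G e)
    (hG : ∀ y, G y ∈ unitaryGroup (Fin 2) ℂ) (hGx : DifferentiableAt ℝ G x) (α β : Fin 3) :
    (weitzDualContorsion e x α β : ℂ) =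
      Complex.I * trace (pauli β * maurerCartan G (Pi.single α 1) x) := by
  have hweitz := he.ofReal_weitz hG hGx
  have hantisymm : ∀ a b c, weitz e x a b c = -weitz e x c b a := by
    intro a b c
    apply Complex.ofReal_injective
    rw [Complex.ofReal_neg, hweitz, hweitz, ← mul_neg, ← trace_neg, ← neg_mul, Ring.lie_def,
      Ring.lie_def, neg_sub]
  set B := maurerCartan G (Pi.single α 1) x
  calc
    (weitzDualContorsion e x α β : ℂ)
      = 4⁻¹ * trace ((∑ μ, ∑ ν, (eps μ ν β : ℂ) • ⁅pauli μ, pauli ν⁆) * B) := by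
        simp only [weitzDualContorsion, weitzContorsion_eq_weitz hantisymm, Complex.ofReal_div,
          Complex.ofReal_sum, Complex.ofReal_mul, hweitz, Finset.sum_mul, trace_sum,
          smul_mul_assoc, trace_smul, Finset.mul_sum, Finset.sum_div]
        refine Finset.sum_congr rfl fun μ _ => Finset.sum_congr rfl fun ν _ => ?_
        simp only [smul_eq_mul, Complex.ofReal_ofNat]
        ring
    _ = Complex.I * trace (pauli β * B) := by
        rw [sum_eps_smul_commutator_pauli, smul_mul_assoc, trace_smul, smul_eq_mul]
        ring

theorem IsRotatedFrame.maurerCartan_eq (he : IsRotatedFrame G e)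
    (hG : ∀ y, G y ∈ specialUnitaryGroup (Fin 2) ℂ) (hGx : DifferentiableAt ℝ G x) (β : Fin 3) :
    maurerCartan G (Pi.single β 1) x =
      (-Complex.I / 2) • ∑ μ, (weitzDualContorsion e x β μ : ℂ) • pauli μ := by
  simp only [he.ofReal_weitzDualContorsion (fun y => (hG y).1) hGx]
  exact eq_sum_pauli_of_trace_eq_zero (trace_maurerCartan_eq_zero hG hGx _)

theorem IsRotatedFrame.fderiv_maurerCartan_eq (he : IsRotatedFrame G e)
    (hG : ∀ y, G y ∈ specialUnitaryGroup (Fin 2) ℂ) (hG2 : ContDiff ℝ 2 G) (x : Fin 3 → ℝ)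
    (α β : Fin 3) :
    fderiv ℝ (maurerCartan G (Pi.single β 1)) x (Pi.single α 1) =
      (-Complex.I / 2) •
        ∑ μ, (pdR α (fun y => weitzDualContorsion e y β μ) x : ℂ) • pauli μ := by
  have hGd : Differentiable ℝ G := hG2.differentiable (by norm_num)
  have hBd := differentiable_maurerCartan hG2 (Pi.single β 1)
  have htrace : trace (fderiv ℝ (maurerCartan G (Pi.single β 1)) x (Pi.single α 1)) = 0 := by
    rw [← fderiv_trace (hBd x)]
    simp [trace_maurerCartan_eq_zero hG (hGd _)]
  have hpdR : ∀ μ, (pdR α (fun y => weitzDualContorsion e y β μ) x : ℂ) = Complex.I *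
      trace (pauli μ * fderiv ℝ (maurerCartan G (Pi.single β 1)) x (Pi.single α 1)) := fun μ =>
    ofReal_fderiv_eq_of_eq_trace (hBd x)
      (fun y => he.ofReal_weitzDualContorsion (fun y => (hG y).1) (hGd y) β μ) _
  simp only [hpdR]
  exact eq_sum_pauli_of_trace_eq_zero htrace

theorem pdC_pdC_entry (hG2 : ContDiff ℝ 2 G) (x : Fin 3 → ℝ) (α β : Fin 3) :
    (of fun i j => pdC α (fun z => pdC β (fun y => G y i j) z) x) =
      fderiv ℝ (fun y => fderiv ℝ G y (Pi.single β 1)) x (Pi.single α 1) := by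
  have hGd : Differentiable ℝ G := hG2.differentiable (by norm_num)
  have hG' : Differentiable ℝ fun y => fderiv ℝ G y (Pi.single β 1) :=
    ((hG2.fderiv_right (m := 1) (by norm_num)).differentiable (by norm_num)).clm_apply
      (differentiable_const _)
  ext i j
  simp only [of_apply, pdC, fderiv_entry (hGd _), fderiv_entry (hG' _)]

theorem second_deriv_of_gauge_transformation_general
    {G : (Fin 3 → ℝ) → Matrix (Fin 2) (Fin 2) ℂ}
    (hG_contDiff : ∀ i j, ContDiff ℝ 2 (fun x => G x i j))
    (hG : ∀ x, G x ∈ specialUnitaryGroup (Fin 2) ℂ)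
    {e : (Fin 3 → ℝ) → Fin 3 → Fin 3 → ℝ} (he : IsRotatedFrame G e)
    (x : Fin 3 → ℝ) (α β : Fin 3) :
    (of fun i j => pdC α (fun z => pdC β (fun y => G y i j) z) x) =
      ((-Complex.I / 4) • (∑ μ, ((pdR α (fun y => weitzDualContorsion e y β μ) x +
            pdR β (fun y => weitzDualContorsion e y α μ) x : ℝ) : ℂ) • pauli μ) -
        ((4⁻¹ * ∑ μ, weitzDualContorsion e x α μ * weitzDualContorsion e x β μ : ℝ) : ℂ) • 1) *
          G x := by
  have hG2 := contDiff_of_contDiff_entries hG_contDiff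
  have hGx := hG2.differentiable (by norm_num) x
  rw [pdC_pdC_entry hG2, fderiv_fderiv_eq_symmetrized_maurerCartan_mul (fun y => (hG y).1) hG2,
    he.fderiv_maurerCartan_eq hG hG2, he.fderiv_maurerCartan_eq hG hG2,
    he.maurerCartan_eq hG hGx, he.maurerCartan_eq hG hGx]
  simp only [smul_mul_smul_comm, ← smul_add, anticommutator_sum_smul_pauli]
  congr 1
  simp only [Complex.ofReal_add, add_smul, Finset.sum_add_distrib, Complex.ofReal_mul,
    Complex.ofReal_sum, Complex.ofReal_inv, Complex.ofReal_ofNat]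
  match_scalars
  · ring
  · ring
  · linear_combination (4⁻¹ * ∑ μ, (weitzDualContorsion e x α μ : ℂ) *
      (weitzDualContorsion e x β μ : ℂ)) * Complex.I_sq

end Weitzenbock

theorem second_deriv_of_gauge_transformation
    (G : (Fin 3 → ℝ) → Matrix (Fin 2) (Fin 2) ℂ)
    (hG_smooth : ∀ i j : Fin 2, ContDiff ℝ (⊤ : ℕ∞) (fun x => G x i j))
    (hG_unitary : ∀ x : Fin 3 → ℝ, G x * (G x)ᴴ = 1)
    (hG_det : ∀ x : Fin 3 → ℝ, (G x).det = 1)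
    (hG_0 : G 0 = 1)
    (e : (Fin 3 → ℝ) → Fin 3 → Fin 3 → ℝ)
    (he : ∀ x : Fin 3 → ℝ, ∀ j α : Fin 3,
      (e x j α : ℂ) = (2⁻¹ : ℂ) * Matrix.trace (pauli j * (G x)ᴴ * pauli α * G x)) :
    ∀ α β : Fin 3,
      (Matrix.of fun i j : Fin 2 =>
          pdC α (fun x => pdC β (fun y => G y i j) x) 0) =
        (-(Complex.I) / 4) •
            (∑ μ, ((pdR α (fun x => weitzDualContorsion e x β μ) 0 +
                    pdR β (fun x => weitzDualContorsion e x α μ) 0 : ℝ) : ℂ) • pauli μ) -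
          (((4⁻¹ : ℝ) * ∑ μ, weitzDualContorsion e 0 α μ * weitzDualContorsion e 0 β μ : ℝ) : ℂ) •
            (1 : Matrix (Fin 2) (Fin 2) ℂ) := by
  intro α β
  have hG : ∀ x, G x ∈ specialUnitaryGroup (Fin 2) ℂ := fun x =>
    mem_specialUnitaryGroup_iff.2 ⟨mem_unitaryGroup_iff.2 (hG_unitary x), hG_det x⟩
  have hG_C2 : ∀ i j, ContDiff ℝ 2 (fun x => G x i j) := fun i j =>
    contDiff_infty.1 (hG_smooth i j) 2
  simpa only [hG_0, mul_one] using second_deriv_of_gauge_transformation_general hG_C2 hG he 0 α β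
end
end

section
/- Let μ̂ : ℝ → ℂ be smooth and compactly supported with support contained in (−2π, 2π) and with μ̂ = 1 on some neighbourhood of 0, and let μ(λ) := (1/2π)·∫_ℝ e^{itλ}·μ̂(t) dt. Then for every α > 0 there exists C > 0 such that for all λ ≥ 1: | Σ_{k=1}^∞ k(k+1)·μ(λ − k − 1/2) − (λ² − 1/4) | ≤ C·λ^{−α}; that is, Σ_{k=1}^∞ k(k+1)·μ(λ − k − 1/2) = λ² − 1/4 + O(λ^{−∞}) as λ → +∞. -/
open Real MeasureTheory

noncomputable section

open Filter Polynomial Topology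
open scoped FourierTransform LineDeriv SchwartzMap

/-!
Let `h` be a Schwartz function which is constant near every integer. Poisson summation evaluates
`∑ n : ℤ, 𝓕⁻ h (x - n)` from the values `h n`. The inverse Fourier transform turns `∂ h` into a
multiple of `y ↦ y * 𝓕⁻ h y`, and `∂ h` vanishes near every integer, so
`∑ n : ℤ, (x - n) ^ m * 𝓕⁻ h (x - n) = 0` for `m ≥ 1`. Hence a polynomial weight `p n` may be
replaced by `p x` and pulled out of the sum.

For `h t = μ̂ (2πt)` only `h 0 = 1` contributes to Poisson's formula, so the sum of
`p (n + s) * μ (λ - n - s)` over all integers `n` is exactly `p λ`. The terms with `n < 0` evaluate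
`μ` at distance at least about `λ + |n|` from the origin and are `O(λ ^ (-∞))`. The Dirac spectrum
of the sphere is the case `p = X ^ 2 - 1 / 4`, `s = 3 / 2`.
-/

section Schwartz

variable {E F : Type*} [NormedAddCommGroup E] [NormedSpace ℝ E] [NormedAddCommGroup F]

theorem eventually_lineDeriv_eq_zero_of_eventuallyConst [NormedSpace ℝ F] {h : 𝓢(E, F)} {x : E}
    (hx : EventuallyConst h (𝓝 x)) (v : E) :
    ∀ᶠ t in 𝓝 x, (∂_{v} h : 𝓢(E, F)) t = 0 := by
  obtain ⟨c, hc⟩ := eventuallyConst_iff_exists_eventuallyEq.mp hx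
  filter_upwards [hc.fderiv (𝕜 := ℝ)] with t ht
  simp [SchwartzMap.lineDerivOp_apply_eq_fderiv, ht]

theorem summable_schwartzMap_add_int [NormedSpace ℝ F] [CompleteSpace F] (f : 𝓢(ℝ, F)) (x : ℝ) :
    Summable fun n : ℤ => f (x + n) := by
  have h_decay := (SchwartzMap.compSubConstCLM ℝ (-x) f).isBigO_cocompact_rpow (-2)
  refine (summable_of_isBigO (Real.summable_abs_int_rpow one_lt_two)
    (h_decay.comp_tendsto Int.tendsto_coe_cofinite)).congr fun n => ?_
  simp [add_comm]

theorem fourierInv_lineDeriv_one_apply [NormedSpace ℂ F] (h : 𝓢(ℝ, F)) (x : ℝ) :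
    𝓕⁻ (∂_{(1 : ℝ)} h) x = -(2 * π * Complex.I) • x • 𝓕⁻ h x := by
  have h_growth : (fun y : ℝ => inner ℝ y (1 : ℝ)).HasTemperateGrowth := by fun_prop
  rw [SchwartzMap.fourierInv_lineDerivOp_eq, smul_apply,
    SchwartzMap.smulLeftCLM_apply_apply h_growth]
  simp

end Schwartz

theorem hasSum_fourierInv_sub_int (h : 𝓢(ℝ, ℂ)) (x : ℝ) :
    HasSum (fun n : ℤ => 𝓕⁻ h (x - n)) (∑' n : ℤ, h n * fourier n (x : UnitAddCircle)) := by
  have h_poisson := SchwartzMap.tsum_eq_tsum_fourier (𝓕⁻ h) x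
  rw [FourierTransform.fourier_fourierInv_eq] at h_poisson
  rw [← h_poisson, ← (Equiv.neg ℤ).hasSum_iff]
  simpa [Function.comp_def] using (summable_schwartzMap_add_int (𝓕⁻ h) x).hasSum

theorem hasSum_pow_mul_fourierInv_sub_int {h : 𝓢(ℝ, ℂ)}
    (hh : ∀ n : ℤ, EventuallyConst h (𝓝 (n : ℝ))) (m : ℕ) (s x : ℝ) :
    HasSum (fun n : ℤ => ((n : ℂ) + s) ^ m * 𝓕⁻ h (x - (n + s)))
      (x ^ m * ∑' n : ℤ, h n * fourier n ((x - s : ℝ) : UnitAddCircle)) := by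
  induction m generalizing h with
  | zero => simpa [sub_sub, add_comm s] using hasSum_fourierInv_sub_int h (x - s)
  | succ m ih =>
    have h_deriv (n : ℤ) := eventually_lineDeriv_eq_zero_of_eventuallyConst (hh n) 1
    have h_moment : HasSum
        (fun n : ℤ => ((n : ℂ) + s) ^ m * 𝓕⁻ (∂_{(1 : ℝ)} h) (x - (n + s))) 0 := by
      simpa [(h_deriv _).self_of_nhds] using
        ih fun n => (EventuallyConst.const 0).congr ((h_deriv n).mono fun _ => Eq.symm)
    -- `n + s = x - (x - (n + s))`, and `∂ h` accounts for the factor `x - (n + s)`.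
    have h_term (n : ℤ) : ((n : ℂ) + s) ^ (m + 1) * 𝓕⁻ h (x - (n + s)) =
        x * (((n : ℂ) + s) ^ m * 𝓕⁻ h (x - (n + s))) + (2 * π * Complex.I)⁻¹ *
          (((n : ℂ) + s) ^ m * 𝓕⁻ (∂_{(1 : ℝ)} h) (x - (n + s))) := by
      have h_inv := inv_mul_cancel₀ Complex.two_pi_I_ne_zero
      rw [fourierInv_lineDeriv_one_apply, smul_eq_mul, Complex.real_smul]
      push_cast
      linear_combination (n + s) ^ m * (x - (n + s)) * 𝓕⁻ h (x - (n + s)) * h_inv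
    simp only [h_term, pow_succ' (x : ℂ), mul_assoc (x : ℂ)]
    simpa only [mul_zero, add_zero] using
      ((ih hh).mul_left (x : ℂ)).add (h_moment.mul_left (2 * π * Complex.I)⁻¹)

theorem hasSum_eval_mul_fourierInv_sub_int {h : 𝓢(ℝ, ℂ)}
    (hh : ∀ n : ℤ, EventuallyConst h (𝓝 (n : ℝ))) (p : ℂ[X]) (s x : ℝ) :
    HasSum (fun n : ℤ => p.eval ((n : ℂ) + s) * 𝓕⁻ h (x - (n + s)))
      (p.eval (x : ℂ) * ∑' n : ℤ, h n * fourier n ((x - s : ℝ) : UnitAddCircle)) := by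
  simp only [eval_eq_sum_range, Finset.sum_mul, mul_assoc]
  exact hasSum_sum fun m _ => (hasSum_pow_mul_fourierInv_sub_int hh m s x).mul_left _

section Tail

variable {A : Type*} [NormedRing A] [NormedSpace ℝ A]

theorem exists_norm_mul_schwartzMap_le (f : 𝓢(ℝ, A)) {q : ℝ → A} {d : ℕ} {B : ℝ}
    (hq : ∀ t, ‖q t‖ ≤ B * (1 + ‖t‖) ^ d) (s : ℝ) (N : ℕ) :
    ∃ C : ℝ, ∀ x r : ℝ, 1 ≤ x → 1 ≤ r →
      ‖q (s - r) * f (x - (s - r))‖ ≤ C * (x ^ N)⁻¹ * (r ^ 2)⁻¹ := by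
  obtain ⟨M, hM⟩ : ∃ M : ℝ, ∀ y, (1 + ‖y‖) ^ (N + d + 2) * ‖f y‖ ≤ M :=
    ⟨_, fun y => by
      simpa using SchwartzMap.one_add_le_sup_seminorm_apply (𝕜 := ℝ) (m := (N + d + 2, 0))
        le_rfl le_rfl f y⟩
  have hB : 0 ≤ B := by simpa using (norm_nonneg _).trans (hq 0)
  obtain ⟨K, hK⟩ : ∃ K, K = 1 + |s| := ⟨_, rfl⟩
  have hK_pos : 0 < K := by rw [hK]; positivity
  refine ⟨B * (2 * K) ^ d * K ^ (N + d + 2) * M, fun x r hx hr => ?_⟩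
  set y := x - (s - r) with hy
  have h_arg : 1 + ‖s - r‖ ≤ 2 * K * r := by
    have : |s - r| ≤ |s| + r := by simpa [abs_of_pos (zero_lt_one.trans_le hr)] using abs_sub s r
    rw [Real.norm_eq_abs]
    nlinarith [abs_nonneg s]
  have h_sum : x + r ≤ K * (1 + ‖y‖) := by
    rw [Real.norm_eq_abs]
    have : x + r = y + s := by rw [hy]; ring
    nlinarith [le_abs_self s, le_abs_self y, mul_nonneg (abs_nonneg s) (abs_nonneg y)]
  have hxy : x ≤ K * (1 + ‖y‖) := by linarith
  have hry : r ≤ K * (1 + ‖y‖) := by linarith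
  rw [← div_eq_mul_inv, ← div_eq_mul_inv, div_div, le_div_iff₀ (by positivity)]
  calc ‖q (s - r) * f y‖ * (x ^ N * r ^ 2)
      ≤ B * (2 * K * r) ^ d * ‖f y‖ * (x ^ N * r ^ 2) := by
        gcongr
        exact (norm_mul_le _ _).trans (by gcongr; exact (hq _).trans (by gcongr))
    _ = B * (2 * K) ^ d * (x ^ N * r ^ (d + 2)) * ‖f y‖ := by ring
    _ ≤ B * (2 * K) ^ d * ((K * (1 + ‖y‖)) ^ N * (K * (1 + ‖y‖)) ^ (d + 2)) * ‖f y‖ := by gcongr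
    _ = B * (2 * K) ^ d * K ^ (N + d + 2) * ((1 + ‖y‖) ^ (N + d + 2) * ‖f y‖) := by
        simp only [mul_pow, pow_add]; ring
    _ ≤ B * (2 * K) ^ d * K ^ (N + d + 2) * M := by gcongr; exact hM y

theorem exists_norm_tsum_mul_schwartzMap_le (f : 𝓢(ℝ, A)) {q : ℝ → A} {d : ℕ} {B : ℝ}
    (hq : ∀ t, ‖q t‖ ≤ B * (1 + ‖t‖) ^ d) (s α : ℝ) :
    ∃ C : ℝ, 0 < C ∧ ∀ x : ℝ, 1 ≤ x →
      ‖∑' n : ℕ, q (s - (n + 1)) * f (x - (s - (n + 1)))‖ ≤ C * x ^ (-α) := by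
  obtain ⟨N, hN⟩ := exists_nat_ge α
  obtain ⟨C, hC⟩ := exists_norm_mul_schwartzMap_le f hq s N
  have h_summable : Summable fun n : ℕ => (((n : ℝ) + 1) ^ 2)⁻¹ := by
    simpa using (summable_nat_add_iff 1).mpr (Real.summable_nat_pow_inv.mpr one_lt_two)
  set S := ∑' n : ℕ, (((n : ℝ) + 1) ^ 2)⁻¹
  have : 0 ≤ S := tsum_nonneg fun n => by positivity
  refine ⟨|C| * S + 1, by positivity, fun x hx => ?_⟩
  have h_pow : (x ^ N)⁻¹ ≤ x ^ (-α) := by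
    rw [← Real.rpow_natCast, ← Real.rpow_neg (by positivity)]
    exact Real.rpow_le_rpow_of_exponent_le hx (by linarith)
  calc ‖∑' n : ℕ, q (s - (n + 1)) * f (x - (s - (n + 1)))‖
      ≤ C * (x ^ N)⁻¹ * S := tsum_of_norm_bounded (h_summable.hasSum.mul_left _)
        fun n : ℕ => hC x (n + 1) hx (by simp)
    _ ≤ |C| * x ^ (-α) * S := by gcongr; exact le_abs_self C
    _ ≤ (|C| * S + 1) * x ^ (-α) := by
        linarith [Real.rpow_nonneg (zero_le_one.trans hx) (-α)]

end Tail

theorem hasTemperateGrowth_polynomial_eval_ofReal (p : ℂ[X]) :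
    (fun t : ℝ => p.eval (t : ℂ)).HasTemperateGrowth := by
  simp only [eval_eq_sum_range]
  fun_prop

theorem tsum_int_eq_tsum_nat_add_tsum_neg_add_one {G : Type*} [AddCommGroup G] [UniformSpace G]
    [IsUniformAddGroup G] [CompleteSpace G] [T2Space G] {F : ℤ → G} (hF : Summable F) :
    ∑' n : ℤ, F n = ∑' n : ℕ, F n + ∑' n : ℕ, F (-(n + 1)) :=
  have ⟨h_nonneg, h_neg⟩ := summable_int_iff_summable_nat_and_neg_add_zero.mp hF
  tsum_of_nat_of_neg_add_one h_nonneg h_neg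

theorem exists_norm_tsum_nat_eval_mul_fourierInv_sub_le {h : 𝓢(ℝ, ℂ)}
    (hh : ∀ n : ℤ, EventuallyConst h (𝓝 (n : ℝ))) (p : ℂ[X]) (s α : ℝ) :
    ∃ C : ℝ, 0 < C ∧ ∀ x : ℝ, 1 ≤ x →
      ‖(∑' k : ℕ, p.eval ((k : ℂ) + s) * 𝓕⁻ h (x - (k + s))) -
          p.eval (x : ℂ) * ∑' n : ℤ, h n * fourier n ((x - s : ℝ) : UnitAddCircle)‖ ≤
        C * x ^ (-α) := by
  obtain ⟨d, B, hB⟩ := (hasTemperateGrowth_polynomial_eval_ofReal p).2 0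
  obtain ⟨C, hC, h_tail⟩ := exists_norm_tsum_mul_schwartzMap_le (𝓕⁻ h)
    (q := fun t : ℝ => p.eval (t : ℂ)) (fun t => by simpa using hB t) s α
  refine ⟨C, hC, fun x hx => ?_⟩
  have h_sum := hasSum_eval_mul_fourierInv_sub_int hh p s x
  rw [← h_sum.tsum_eq, tsum_int_eq_tsum_nat_add_tsum_neg_add_one h_sum.summable]
  simp only [Int.cast_natCast, sub_add_cancel_left, norm_neg]
  simpa [sub_eq_neg_add] using h_tail x hx

theorem fourierInv_comp_two_pi_mul (g : ℝ → ℂ) (x : ℝ) :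
    𝓕⁻ (fun t => g (2 * π * t)) x =
      (1 / (2 * π) : ℝ) * ∫ t : ℝ, Complex.exp (Complex.I * t * x) * g t := by
  have h_scale := Measure.integral_comp_mul_left
    (fun t : ℝ => Complex.exp (Complex.I * t * x) * g t) (2 * π)
  rw [abs_of_pos (by positivity), Complex.real_smul] at h_scale
  rw [Real.fourierInv_eq', one_div, ← h_scale]
  congr with t
  have h_phase : (((2 * π * inner ℝ t x : ℝ) : ℂ) * Complex.I) =
      Complex.I * ((2 * π * t : ℝ) : ℂ) * x := by
    simp only [RCLike.inner_apply, conj_trivial]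
    push_cast
    ring
  rw [smul_eq_mul, h_phase]

/-- The Schwartz function `t ↦ f (2πt)`, which converts the angular frequency convention
`e^{itλ}` into Mathlib's `e^{2πitλ}`. -/
def dilateTwoPi (f : 𝓢(ℝ, ℂ)) : 𝓢(ℝ, ℂ) :=
  SchwartzMap.compCLMOfContinuousLinearEquiv ℂ
    (ContinuousLinearEquiv.unitsEquivAut ℝ (Units.mk0 (2 * π) two_pi_pos.ne')) f

theorem dilateTwoPi_apply (f : 𝓢(ℝ, ℂ)) (t : ℝ) : dilateTwoPi f t = f (2 * π * t) := by
  simp [dilateTwoPi, mul_comm]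

theorem dirac_sphere_mollified_counting_general (muhat : 𝓢(ℝ, ℂ))
    (h_one : ∀ᶠ t in 𝓝 (0 : ℝ), muhat t = 1)
    (h_zero : ∀ n : ℤ, n ≠ 0 → ∀ᶠ t in 𝓝 (2 * π * n), muhat t = 0)
    (mu : ℝ → ℂ)
    (hmu : ∀ lam : ℝ, mu lam =
      (1 / (2 * π) : ℝ) * ∫ t : ℝ, Complex.exp (Complex.I * t * lam) * muhat t)
    (p : ℂ[X]) (s α : ℝ) :
    ∃ C : ℝ, 0 < C ∧ ∀ lam : ℝ, 1 ≤ lam →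
      ‖(∑' k : ℕ, p.eval ((k : ℂ) + s) * mu (lam - (k + s))) - p.eval (lam : ℂ)‖ ≤
        C * lam ^ (-α) := by
  have h_mu (x : ℝ) : mu x = 𝓕⁻ (dilateTwoPi muhat) x := by
    rw [hmu, ← fourierInv_comp_two_pi_mul, SchwartzMap.fourierInv_coe]
    simp only [← dilateTwoPi_apply]
  have h_tendsto (x : ℝ) : Tendsto (2 * π * ·) (𝓝 x) (𝓝 (2 * π * x)) :=
    (continuous_const_mul _).tendsto x
  have h_const (n : ℤ) : EventuallyConst (dilateTwoPi muhat) (𝓝 (n : ℝ)) := by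
    simp only [funext (dilateTwoPi_apply muhat)]
    suffices EventuallyConst muhat (𝓝 (2 * π * n)) from this.comp_tendsto (h_tendsto n)
    rcases eq_or_ne n 0 with rfl | hn
    · exact (EventuallyConst.const 1).congr (by simpa [EventuallyEq, eq_comm] using h_one)
    · exact (EventuallyConst.const 0).congr ((h_zero n hn).mono fun _ => Eq.symm)
  have h_poisson (y : UnitAddCircle) : ∑' n : ℤ, dilateTwoPi muhat n * fourier n y = 1 := by
    rw [tsum_eq_single 0 fun n hn => by simp [dilateTwoPi_apply, (h_zero n hn).self_of_nhds]]
    simp [dilateTwoPi_apply, h_one.self_of_nhds]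
  simpa only [h_mu, h_poisson, mul_one] using
    exists_norm_tsum_nat_eval_mul_fourierInv_sub_le h_const p s α

theorem two_pi_mul_intCast_notMem_Ioo {n : ℤ} (hn : n ≠ 0) :
    2 * π * n ∉ Set.Ioo (-(2 * π)) (2 * π) := by
  have h_abs : (1 : ℝ) ≤ |(n : ℝ)| := by exact_mod_cast Int.one_le_abs hn
  rw [Set.mem_Ioo, ← abs_lt, abs_mul, abs_of_pos two_pi_pos, not_lt]
  exact le_mul_of_one_le_right two_pi_pos.le h_abs

theorem dirac_sphere_mollified_counting
    (muhat : ℝ → ℂ)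
    (h_smooth : ContDiff ℝ (⊤ : ℕ∞) muhat)
    (h_compact : HasCompactSupport muhat)
    (h_supp : tsupport muhat ⊆ Set.Ioo (-(2 * π)) (2 * π))
    (h_one : ∀ᶠ t in nhds (0 : ℝ), muhat t = 1)
    (mu : ℝ → ℂ)
    (hmu : ∀ lam : ℝ, mu lam =
      (1 / (2 * π) : ℝ) * ∫ t : ℝ, Complex.exp (Complex.I * t * lam) * muhat t) :
    ∀ α : ℝ, 0 < α → ∃ C : ℝ, 0 < C ∧ ∀ lam : ℝ, 1 ≤ lam →
      ‖(∑' k : ℕ, (((k : ℂ) + 1) * ((k : ℂ) + 2)) * mu (lam - ((k : ℝ) + 1) - 1 / 2)) -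
          ((lam : ℂ) ^ 2 - 1 / 4)‖ ≤ C * lam ^ (-α) := by
  intro α _
  have h_zero (n : ℤ) (hn : n ≠ 0) : ∀ᶠ t in 𝓝 (2 * π * n), muhat t = 0 :=
    notMem_tsupport_iff_eventuallyEq.mp fun h_mem => two_pi_mul_intCast_notMem_Ioo hn (h_supp h_mem)
  have h_eval (z : ℂ) : (X ^ 2 - C (1 / 4) : ℂ[X]).eval z = z ^ 2 - 1 / 4 := by simp
  have h_weight (k : ℕ) : ((k : ℂ) + (3 / 2 : ℝ)) ^ 2 - 1 / 4 = (k + 1) * (k + 2) := by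
    push_cast
    ring
  have h_shift (lam : ℝ) (k : ℕ) : lam - (k + 3 / 2) = lam - (k + 1) - 1 / 2 := by ring
  have h_asymp := dirac_sphere_mollified_counting_general (h_compact.toSchwartzMap h_smooth)
    h_one h_zero mu hmu (X ^ 2 - C (1 / 4)) (3 / 2) α
  simpa only [h_eval, h_weight, h_shift] using h_asymp
end
end

section
/- On ℝ³ with coordinates x = (u,v,w), let f² := (u² + v² + w²)/4, let g_{αβ}(x) := (1 + f²)^{−2}·δ_{αβ} be the stereographic round metric, and let e_{±,j} := V_{±,j} be the frames V_{±,1} = (1/2)(2 − 2f² + u², uv ∓ 2w, uw ± 2v), V_{±,2} = (1/2)(uv ± 2w, 2 − 2f² + v², vw ∓ 2u), V_{±,3} = (1/2)(uw ∓ 2v, vw ± 2u, 2 − 2f² + w²). Define the Christoffel symbols Γ^α_{βγ} := (1/2)·g^{αρ}(∂_β g_{ργ} + ∂_γ g_{ρβ} − ∂_ρ g_{βγ}), the Weitzenböck coefficients Υ^α_{βγ} := Σ_j e_{±,j}^α · ∂_β( δ^{jk} g_{γδ} e_{±,k}^δ ), the contorsion K^α{}_{βγ} := Υ^α_{βγ}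 − Γ^α_{βγ}, the Riemannian density ρ := √(det g) = (1 + f²)^{−3}, and the dual *K_{αβ} := (1/2)·K^μ{}_α{}^ν · ρ·ε_{μνβ}, where K^μ{}_α{}^ν := K^μ{}_{αγ}·g^{γν} and ε is the totally antisymmetric symbol with ε₁₂₃ = 1. Then for all x ∈ ℝ³ and all α, β: *K_{αβ}(x) = ∓ g_{αβ}(x) (minus sign for the framing V_{+}, plus sign for V_{−}). -/
noncomputable section

/-- `f² = (u² + v² + w²)/4` in stereographic coordinates `x = (u,v,w)`. -/
def fsq (x : Fin 3 → ℝ) : ℝ := (∑ i, x i ^ 2) / 4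

/-- The stereographic round metric `g_{αβ} = (1 + f²)^{-2} δ_{αβ}` of the unit 3-sphere. -/
def gmet (x : Fin 3 → ℝ) (a b : Fin 3) : ℝ :=
  ((1 + fsq x) ^ 2)⁻¹ * (if a = b then 1 else 0)

/-- The inverse metric `g^{αβ} = (1 + f²)^2 δ^{αβ}`. -/
def ginv (x : Fin 3 → ℝ) (a b : Fin 3) : ℝ :=
  (1 + fsq x) ^ 2 * (if a = b then 1 else 0)

/-- Christoffel symbols `Γ^α_{βγ} = (1/2) g^{αρ} (∂_β g_{ργ} + ∂_γ g_{ρβ} − ∂_ρ g_{βγ})`. -/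
def christoffel (x : Fin 3 → ℝ) (a b c : Fin 3) : ℝ :=
  (2⁻¹ : ℝ) * ∑ r, ginv x a r *
    (pdR b (fun y => gmet y r c) x + pdR c (fun y => gmet y r b) x -
      pdR r (fun y => gmet y b c) x)

/-- The framings `V_{±,j}` of the round 3-sphere in stereographic coordinates;
`s = 1` gives `V_+`, `s = -1` gives `V_-`.  `frameS s x j α` is the `α`-th component
of the `j`-th frame vector at the point `x`. -/
def frameS (s : ℝ) (x : Fin 3 → ℝ) (j α : Fin 3) : ℝ :=
  (2⁻¹ : ℝ) *
    !![2 - 2 * fsq x + x 0 ^ 2, x 0 * x 1 - 2 * s * x 2, x 0 * x 2 + 2 * s * x 1;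
       x 0 * x 1 + 2 * s * x 2, 2 - 2 * fsq x + x 1 ^ 2, x 1 * x 2 - 2 * s * x 0;
       x 0 * x 2 - 2 * s * x 1, x 1 * x 2 + 2 * s * x 0, 2 - 2 * fsq x + x 2 ^ 2] j α

/-- Weitzenböck coefficients `Υ^α_{βγ} = Σ_j e_j^α ∂_β (δ^{jk} g_{γδ} e_k^δ)`. -/
def upsilon (s : ℝ) (x : Fin 3 → ℝ) (a b c : Fin 3) : ℝ :=
  ∑ j, frameS s x j a * pdR b (fun y => ∑ d, gmet y c d * frameS s y j d) x

/-- Contorsion `K^α_{βγ} = Υ^α_{βγ} − Γ^α_{βγ}`. -/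
def contorK (s : ℝ) (x : Fin 3 → ℝ) (a b c : Fin 3) : ℝ :=
  upsilon s x a b c - christoffel x a b c

/-- The Riemannian density `ρ = √(det g) = (1 + f²)^{-3}`. -/
def dens (x : Fin 3 → ℝ) : ℝ := ((1 + fsq x) ^ 3)⁻¹

/-- Hodge dual of the contorsion in its first and third indices,
`*K_{αβ} = (1/2) K^μ{}_α{}^ν ρ ε_{μνβ}` with `K^μ{}_α{}^ν = K^μ{}_{αγ} g^{γν}`. -/
def dualContorK (s : ℝ) (x : Fin 3 → ℝ) (a b : Fin 3) : ℝ :=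
  (2⁻¹ : ℝ) * ∑ μ, ∑ ν, (∑ γ, contorK s x μ a γ * ginv x γ ν) * dens x * eps μ ν b

/-!
When `s² = 1`, the matrix whose rows are the frame vectors is the Euler–Rodrigues matrix `E(z)` of
the quaternion `1 + z` with `z = s x / 2`, so it is `1 + |z|² = 1 + f²` times a rotation. Writing
`[z]ₓ` for the matrix of `v ↦ z × v`, the vector triple product formula gives
`E(z)ᵀ E(z) = (1 + |z|²)² 1` and
`E(z)ᵀ dE(z)(w) = 2 (1 + |z|²) ((z · w) 1 + [w × z]ₓ + [w]ₓ)`.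
For `w = s e_β / 2` the terms even in `s` make up the Levi-Civita connection, and what is left is
`K^α_{βγ} = s (1 + f²)⁻¹ ([e_β]ₓ)_{αγ}`. As `ε_{μνβ} = -([e_β]ₓ)_{μν}` and
`tr([z]ₓᵀ [w]ₓ) = 2 z · w`, its Hodge dual is `-s g`.
-/

section EulerRodrigues

open Matrix

variable {R : Type*} [CommRing R]

/-- The matrix `[z]ₓ` of the linear map `w ↦ z × w`, as a linear function of `z`. -/
def crossMatrix : (Fin 3 → R) →ₗ[R] Matrix (Fin 3) (Fin 3) R :=
  LinearMap.toMatrix'.toLinearMap ∘ₗ crossProduct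

theorem crossMatrix_mulVec (z w : Fin 3 → R) : crossMatrix z *ᵥ w = z ⨯₃ w :=
  LinearMap.toMatrix'_mulVec _ w

theorem crossMatrix_eq (z : Fin 3 → R) :
    crossMatrix z = !![0, -z 2, z 1; z 2, 0, -z 0; -z 1, z 0, 0] := by
  ext i j
  fin_cases i <;> fin_cases j <;> simp [crossMatrix, LinearMap.toMatrix'_apply, cross_apply]

theorem transpose_crossMatrix (z : Fin 3 → R) : (crossMatrix z)ᵀ = -crossMatrix z := by
  ext i j
  fin_cases i <;> fin_cases j <;> simp [crossMatrix_eq]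

theorem vecMul_crossMatrix (z w : Fin 3 → R) : w ᵥ* crossMatrix z = w ⨯₃ z := by
  rw [← mulVec_transpose, transpose_crossMatrix, neg_mulVec, crossMatrix_mulVec, cross_anticomm]

theorem crossMatrix_mul_crossMatrix (z w : Fin 3 → R) :
    crossMatrix z * crossMatrix w = vecMulVec w z - (z ⬝ᵥ w) • 1 := by
  refine ext_of_mulVec_single fun i => ?_
  rw [← mulVec_mulVec, crossMatrix_mulVec, crossMatrix_mulVec, cross_cross_eq_smul_sub_smul',
    sub_mulVec, vecMulVec_mulVec, smul_mulVec, one_mulVec, op_smul_eq_smul, dotProduct_comm w z]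

theorem crossMatrix_cross (z w : Fin 3 → R) :
    crossMatrix (z ⨯₃ w) = vecMulVec w z - vecMulVec z w := by
  refine ext_of_mulVec_single fun i => ?_
  rw [crossMatrix_mulVec, cross_cross_eq_smul_sub_smul, sub_mulVec, vecMulVec_mulVec,
    vecMulVec_mulVec, op_smul_eq_smul, op_smul_eq_smul]

theorem vecMulVec_cross_sub_vecMulVec_cross (z w : Fin 3 → R) :
    vecMulVec z (z ⨯₃ w) - vecMulVec (z ⨯₃ w) z =
      (z ⬝ᵥ z) • crossMatrix w - (z ⬝ᵥ w) • crossMatrix z := by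
  rw [← crossMatrix_cross, cross_cross_eq_smul_sub_smul, map_sub, map_smul, map_smul,
    dotProduct_comm w z]

theorem trace_transpose_crossMatrix_mul_crossMatrix (z w : Fin 3 → R) :
    ((crossMatrix z)ᵀ * crossMatrix w).trace = 2 * (z ⬝ᵥ w) := by
  rw [transpose_crossMatrix, neg_mul, crossMatrix_mul_crossMatrix, trace_neg, trace_sub,
    trace_vecMulVec, trace_smul, trace_one, Fintype.card_fin, dotProduct_comm w z, smul_eq_mul]
  push_cast
  ring

/-- The Euler–Rodrigues matrix of the quaternion `q = 1 + z`, i.e. the matrix of `v ↦ q v q̄` on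
imaginary quaternions. It is `|q|²` times a rotation. -/
def eulerRodrigues (z : Fin 3 → R) : Matrix (Fin 3) (Fin 3) R :=
  (1 - z ⬝ᵥ z) • 1 + (2 : R) • vecMulVec z z + (2 : R) • crossMatrix z

/-- The derivative of `eulerRodrigues` at `z` in the direction `w`, i.e. the coefficient of `t` in
`eulerRodrigues (z + t • w)`. -/
def eulerRodriguesDeriv (z w : Fin 3 → R) : Matrix (Fin 3) (Fin 3) R :=
  (-2 * (z ⬝ᵥ w)) • 1 + (2 : R) • (vecMulVec z w + vecMulVec w z) + (2 : R) • crossMatrix w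

theorem eulerRodrigues_add_smul (z w : Fin 3 → R) (t : R) :
    eulerRodrigues (z + t • w) = eulerRodrigues z + t • eulerRodriguesDeriv z w +
      t ^ 2 • (-(w ⬝ᵥ w) • 1 + (2 : R) • vecMulVec w w) := by
  simp only [eulerRodrigues, eulerRodriguesDeriv, map_add, map_smul, add_dotProduct,
    dotProduct_add, smul_dotProduct, dotProduct_smul, add_vecMulVec, vecMulVec_add,
    smul_vecMulVec, vecMulVec_smul, dotProduct_comm w z, smul_eq_mul]
  module

theorem transpose_eulerRodrigues (z : Fin 3 → R) :
    (eulerRodrigues z)ᵀ = (1 - z ⬝ᵥ z) • 1 + (2 : R) • vecMulVec z z - (2 : R) • crossMatrix z := by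
  simp only [eulerRodrigues, transpose_add, transpose_smul, transpose_one, transpose_vecMulVec,
    transpose_crossMatrix, smul_neg, sub_eq_add_neg]

theorem transpose_eulerRodrigues_mul_self (z : Fin 3 → R) :
    (eulerRodrigues z)ᵀ * eulerRodrigues z = (1 + z ⬝ᵥ z) ^ 2 • 1 := by
  rw [transpose_eulerRodrigues, eulerRodrigues]
  simp only [add_mul, sub_mul, mul_add, smul_mul_assoc, mul_smul_comm, one_mul, mul_one,
    mul_vecMulVec, vecMulVec_mulVec, op_smul_eq_smul, smul_vecMulVec, crossMatrix_mulVec,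
    vecMulVec_mul, vecMul_crossMatrix, crossMatrix_mul_crossMatrix, cross_self, vecMulVec_zero,
    zero_vecMulVec]
  module

theorem transpose_eulerRodrigues_mul_deriv (z w : Fin 3 → R) :
    (eulerRodrigues z)ᵀ * eulerRodriguesDeriv z w =
      (2 * (1 + z ⬝ᵥ z)) • ((z ⬝ᵥ w) • 1 + crossMatrix (w ⨯₃ z + w)) := by
  have schouten := vecMulVec_cross_sub_vecMulVec_cross z w
  rw [transpose_eulerRodrigues, eulerRodriguesDeriv, map_add, crossMatrix_cross]
  simp only [add_mul, sub_mul, mul_add, smul_mul_assoc, mul_smul_comm, one_mul, mul_one,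
    mul_vecMulVec, vecMulVec_mulVec, op_smul_eq_smul, smul_vecMulVec, crossMatrix_mulVec,
    vecMulVec_mul, vecMul_crossMatrix, crossMatrix_mul_crossMatrix, cross_self, zero_vecMulVec]
  linear_combination (norm := module) (4 : R) • schouten

theorem differentiable_eulerRodrigues_apply {𝕜 : Type*} [NontriviallyNormedField 𝕜]
    (i j : Fin 3) : Differentiable 𝕜 fun z : Fin 3 → 𝕜 => eulerRodrigues z i j := by
  let entry : (Fin 3 → 𝕜) →ₗ[𝕜] 𝕜 := Matrix.entryLinearMap 𝕜 𝕜 i j ∘ₗ crossMatrix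
  have hcross : Differentiable 𝕜 fun z : Fin 3 → 𝕜 => crossMatrix z i j :=
    (⟨entry, entry.continuous_on_pi⟩ : (Fin 3 → 𝕜) →L[𝕜] 𝕜).differentiable
  simp only [eulerRodrigues, Matrix.add_apply, Matrix.smul_apply, vecMulVec_apply, dotProduct,
    smul_eq_mul]
  fun_prop

theorem hasLineDerivAt_eulerRodrigues_apply {𝕜 : Type*} [NontriviallyNormedField 𝕜]
    (i j : Fin 3) (z w : Fin 3 → 𝕜) :
    HasLineDerivAt 𝕜 (fun z => eulerRodrigues z i j) (eulerRodriguesDeriv z w i j) z w := by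
  simp only [HasLineDerivAt, eulerRodrigues_add_smul, Matrix.add_apply, Matrix.smul_apply,
    smul_eq_mul]
  refine ((((hasDerivAt_id (0 : 𝕜)).mul_const _).const_add _).add
    (((hasDerivAt_id (0 : 𝕜)).pow 2).mul_const _)).congr_deriv ?_
  simp

end EulerRodrigues

section PartialDerivatives

variable {f g : (Fin 3 → ℝ) → ℝ} {x : Fin 3 → ℝ}

theorem pdR_mul (a : Fin 3) (hf : DifferentiableAt ℝ f x) (hg : DifferentiableAt ℝ g x) :
    pdR a (fun y => f y * g y) x = pdR a f x * g x + f x * pdR a g x := by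
  simp only [pdR, fderiv_fun_mul hf hg, add_apply, smul_apply, smul_eq_mul]
  ring

theorem pdR_mul_const (a : Fin 3) (hf : DifferentiableAt ℝ f x) (r : ℝ) :
    pdR a (fun y => f y * r) x = pdR a f x * r := by
  simp only [pdR, fderiv_mul_const hf, smul_apply, smul_eq_mul, mul_comm r]

theorem pdR_comp {φ : ℝ → ℝ} {φ' : ℝ} (a : Fin 3) (hφ : HasDerivAt φ φ' (f x))
    (hf : DifferentiableAt ℝ f x) : pdR a (fun y => φ (f y)) x = φ' * pdR a f x := by
  have h : HasFDerivAt (fun y => φ (f y)) (φ' • fderiv ℝ f x) x :=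
    hφ.comp_hasFDerivAt x hf.hasFDerivAt
  simp only [pdR, h.fderiv, smul_apply, smul_eq_mul]

theorem pdR_eq_of_hasLineDerivAt {f' : ℝ} (a : Fin 3) (hf : DifferentiableAt ℝ f x)
    (h : HasLineDerivAt ℝ f f' x (Pi.single a 1)) : pdR a f x = f' := by
  rw [pdR, ← hf.lineDeriv_eq_fderiv, h.lineDeriv]

end PartialDerivatives

section RoundMetric

open Matrix

theorem one_add_fsq_pos (x : Fin 3 → ℝ) : 0 < 1 + fsq x := by
  unfold fsq
  positivity

theorem differentiable_fsq : Differentiable ℝ fsq := by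
  unfold fsq
  fun_prop

theorem pdR_fsq (a : Fin 3) (x : Fin 3 → ℝ) : pdR a fsq x = x a / 2 := by
  have hsq (i : Fin 3) : HasFDerivAt (fun y : Fin 3 → ℝ => y i ^ 2)
      ((2 * x i) • ContinuousLinearMap.proj (R := ℝ) (φ := fun _ => ℝ) i) x := by
    simpa using (hasFDerivAt_apply (𝕜 := ℝ) i x).pow 2
  have hfsq := (HasFDerivAt.fun_sum fun i (_ : i ∈ Finset.univ) => hsq i).mul_const (4 : ℝ)⁻¹
  calc pdR a fsq x = 4⁻¹ * (2 * x a) := by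
        simp [pdR, show fsq = fun y => (∑ i, y i ^ 2) * 4⁻¹ from rfl, hfsq.fderiv, Pi.single_apply]
    _ = x a / 2 := by ring

/-- The factor `(1 + f²)⁻²` by which the round metric is conformal to the Euclidean one. -/
def conformalFactor (x : Fin 3 → ℝ) : ℝ := ((1 + fsq x) ^ 2)⁻¹

theorem gmet_eq (x : Fin 3 → ℝ) (a b : Fin 3) :
    gmet x a b = conformalFactor x * (1 : Matrix (Fin 3) (Fin 3) ℝ) a b := rfl

theorem sum_gmet_mul (x v : Fin 3 → ℝ) (a : Fin 3) :
    ∑ b, gmet x a b * v b = conformalFactor x * v a := by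
  simp [gmet_eq, one_apply]

theorem sum_ginv_mul (x v : Fin 3 → ℝ) (a : Fin 3) :
    ∑ b, ginv x a b * v b = (1 + fsq x) ^ 2 * v a := by
  simp [ginv]

theorem sum_mul_ginv (x v : Fin 3 → ℝ) (b : Fin 3) :
    ∑ a, v a * ginv x a b = (1 + fsq x) ^ 2 * v b := by
  simp [ginv, mul_comm]

theorem hasDerivAt_inv_one_add_sq {t : ℝ} (ht : 1 + t ≠ 0) :
    HasDerivAt (fun t : ℝ => ((1 + t) ^ 2)⁻¹) (-2 / (1 + t) ^ 3) t := by
  have h := (((hasDerivAt_id t).const_add 1).pow 2).inv (pow_ne_zero 2 ht)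
  refine h.congr_deriv ?_
  simp only [Nat.cast_ofNat, id_eq, Nat.add_one_sub_one, pow_one, mul_one, Pi.pow_apply]
  field_simp

theorem differentiable_conformalFactor : Differentiable ℝ conformalFactor := fun x =>
  (hasDerivAt_inv_one_add_sq (one_add_fsq_pos x).ne').differentiableAt.comp x (differentiable_fsq x)

theorem pdR_conformalFactor (a : Fin 3) (x : Fin 3 → ℝ) :
    pdR a conformalFactor x = -x a / (1 + fsq x) ^ 3 :=
  calc pdR a conformalFactor x = -2 / (1 + fsq x) ^ 3 * pdR a fsq x :=
        pdR_comp a (hasDerivAt_inv_one_add_sq (one_add_fsq_pos x).ne') (differentiable_fsq x)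
    _ = -x a / (1 + fsq x) ^ 3 := by rw [pdR_fsq]; ring

theorem pdR_gmet (x : Fin 3 → ℝ) (a b c : Fin 3) :
    pdR a (fun y => gmet y b c) x =
      -x a / (1 + fsq x) ^ 3 * (1 : Matrix (Fin 3) (Fin 3) ℝ) b c := by
  simp only [gmet_eq]
  rw [pdR_mul_const a (differentiable_conformalFactor x), pdR_conformalFactor]

theorem christoffel_eq (x : Fin 3 → ℝ) (a b c : Fin 3) :
    christoffel x a b c =
      (2 * (1 + fsq x))⁻¹ * (crossMatrix (Pi.single b 1 ⨯₃ x) - x b • 1) a c := by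
  have hpos := one_add_fsq_pos x
  have hab : (1 : Matrix (Fin 3) (Fin 3) ℝ) a b = (Pi.single b 1 : Fin 3 → ℝ) a := by
    rw [one_apply, Pi.single_apply]
  have hbc : (1 : Matrix (Fin 3) (Fin 3) ℝ) b c = (Pi.single b 1 : Fin 3 → ℝ) c :=
    one_eq_pi_single
  simp only [christoffel, sum_ginv_mul, pdR_gmet, crossMatrix_cross, Matrix.sub_apply,
    Matrix.smul_apply, vecMulVec_apply, smul_eq_mul, hab, hbc]
  field_simp
  ring

end RoundMetric

section Framing

open Matrix

variable {s : ℝ}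

theorem half_smul_dotProduct_half_smul (hs : s ^ 2 = 1) (x : Fin 3 → ℝ) :
    ((s / 2) • x) ⬝ᵥ ((s / 2) • x) = fsq x := by
  have hx : x ⬝ᵥ x = 4 * fsq x := by
    rw [fsq, mul_div_cancel₀ _ four_ne_zero]
    exact Finset.sum_congr rfl fun i _ => (sq (x i)).symm
  rw [smul_dotProduct, dotProduct_smul, hx, smul_eq_mul, smul_eq_mul]
  linear_combination fsq x * hs

theorem eulerRodrigues_half_smul (hs : s ^ 2 = 1) (x : Fin 3 → ℝ) :
    eulerRodrigues ((s / 2) • x) =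
      (1 - fsq x) • 1 + (2⁻¹ : ℝ) • vecMulVec x x + s • crossMatrix x := by
  rw [eulerRodrigues, half_smul_dotProduct_half_smul hs, smul_vecMulVec, vecMulVec_smul, map_smul]
  match_scalars
  · ring
  · linear_combination hs / 2
  · ring

theorem frameS_eq_eulerRodrigues (hs : s ^ 2 = 1) (x : Fin 3 → ℝ) (j a : Fin 3) :
    frameS s x j a = eulerRodrigues ((s / 2) • x) j a := by
  rw [eulerRodrigues_half_smul hs, crossMatrix_eq]
  fin_cases j <;> fin_cases a <;> simp [frameS, vecMulVec_apply] <;> ring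

theorem differentiable_frameS (hs : s ^ 2 = 1) (j a : Fin 3) :
    Differentiable ℝ fun y => frameS s y j a := by
  simp only [frameS_eq_eulerRodrigues hs]
  have h : Differentiable ℝ fun z : Fin 3 → ℝ => eulerRodrigues z j a :=
    differentiable_eulerRodrigues_apply j a
  exact h.comp (differentiable_id.const_smul (s / 2))

theorem pdR_frameS (hs : s ^ 2 = 1) (x : Fin 3 → ℝ) (b j a : Fin 3) :
    pdR b (fun y => frameS s y j a) x =
      eulerRodriguesDeriv ((s / 2) • x) ((s / 2) • Pi.single b 1) j a := by
  refine pdR_eq_of_hasLineDerivAt b (differentiable_frameS hs j a x) ?_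
  have h := hasLineDerivAt_eulerRodrigues_apply j a ((s / 2) • x) ((s / 2) • Pi.single b 1)
  simp only [HasLineDerivAt, frameS_eq_eulerRodrigues hs, smul_add] at h ⊢
  simpa only [smul_comm (s / 2)] using h

theorem pdR_coframe (hs : s ^ 2 = 1) (x : Fin 3 → ℝ) (b j c : Fin 3) :
    pdR b (fun y => ∑ d, gmet y c d * frameS s y j d) x =
      -x b / (1 + fsq x) ^ 3 * eulerRodrigues ((s / 2) • x) j c + ((1 + fsq x) ^ 2)⁻¹ *
        eulerRodriguesDeriv ((s / 2) • x) ((s / 2) • Pi.single b 1) j c := by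
  simp only [sum_gmet_mul]
  rw [pdR_mul b (differentiable_conformalFactor x) (differentiable_frameS hs j c x),
    pdR_conformalFactor, pdR_frameS hs, frameS_eq_eulerRodrigues hs, conformalFactor]

theorem upsilon_eq_transpose_mul (hs : s ^ 2 = 1) (x : Fin 3 → ℝ) (a b c : Fin 3) :
    upsilon s x a b c =
      -x b / (1 + fsq x) ^ 3 *
          ((eulerRodrigues ((s / 2) • x))ᵀ * eulerRodrigues ((s / 2) • x)) a c +
        ((1 + fsq x) ^ 2)⁻¹ * ((eulerRodrigues ((s / 2) • x))ᵀ *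
          eulerRodriguesDeriv ((s / 2) • x) ((s / 2) • Pi.single b 1)) a c := by
  simp only [upsilon, pdR_coframe hs]
  simp only [frameS_eq_eulerRodrigues hs, mul_apply, transpose_apply, Finset.mul_sum,
    ← Finset.sum_add_distrib]
  exact Finset.sum_congr rfl fun j _ => by ring

theorem upsilon_eq (hs : s ^ 2 = 1) (x : Fin 3 → ℝ) (a b c : Fin 3) :
    upsilon s x a b c =
      (2 * (1 + fsq x))⁻¹ * (crossMatrix (Pi.single b 1 ⨯₃ x) - x b • 1) a c +
        s * (1 + fsq x)⁻¹ * crossMatrix (Pi.single b 1) a c := by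
  have hpos := one_add_fsq_pos x
  have hs4 : s / 2 * (s / 2) = 1 / 4 := by linear_combination hs / 4
  have hdot : ((s / 2) • x) ⬝ᵥ ((s / 2) • Pi.single b 1) = x b / 4 := by
    rw [smul_dotProduct, dotProduct_smul, dotProduct_single_one, smul_smul, hs4, smul_eq_mul]
    ring
  have hcross : ((s / 2) • Pi.single b 1) ⨯₃ ((s / 2) • x) =
      (1 / 4 : ℝ) • (Pi.single b 1 ⨯₃ x) := by
    rw [map_smul, map_smul, LinearMap.smul_apply, smul_smul, hs4]
  rw [upsilon_eq_transpose_mul hs, transpose_eulerRodrigues_mul_self,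
    transpose_eulerRodrigues_mul_deriv, half_smul_dotProduct_half_smul hs, hdot, hcross]
  simp only [map_add, map_smul, Matrix.add_apply, Matrix.sub_apply, Matrix.smul_apply, smul_eq_mul]
  field_simp
  ring

theorem contorK_eq (hs : s ^ 2 = 1) (x : Fin 3 → ℝ) (a b c : Fin 3) :
    contorK s x a b c = s * (1 + fsq x)⁻¹ * crossMatrix (Pi.single b 1) a c := by
  rw [contorK, upsilon_eq hs, christoffel_eq, add_sub_cancel_left]

end Framing

section LeviCivitaSymbol

open Matrix

theorem eps_eq_neg_crossMatrix (i j k : Fin 3) :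
    eps i j k = -crossMatrix (Pi.single k 1) i j := by
  rw [crossMatrix_eq]
  fin_cases i <;> fin_cases j <;> fin_cases k <;> simp [eps] <;> norm_num

theorem sum_crossMatrix_mul_eps (a b : Fin 3) :
    ∑ i, ∑ j, crossMatrix (Pi.single a 1) i j * eps i j b =
      -2 * (1 : Matrix (Fin 3) (Fin 3) ℝ) a b :=
  calc ∑ i, ∑ j, crossMatrix (Pi.single a 1) i j * eps i j b
      = -((crossMatrix (Pi.single a (1 : ℝ)))ᵀ * crossMatrix (Pi.single b 1)).trace := by
        simp only [eps_eq_neg_crossMatrix, mul_neg, Finset.sum_neg_distrib, trace, diag_apply,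
          mul_apply, transpose_apply]
        rw [Finset.sum_comm]
    _ = -2 * (1 : Matrix (Fin 3) (Fin 3) ℝ) a b := by
        rw [trace_transpose_crossMatrix_mul_crossMatrix, dotProduct_single_one, one_eq_pi_single,
          neg_mul]

end LeviCivitaSymbol

/-- The Einstein property of the two standard framings of the round 3-sphere:
`*K_{αβ} = ∓ g_{αβ}` (minus sign for the framing `V_+`, plus sign for `V_-`). -/
theorem sphere_framing_einstein_property
    (s : ℝ) (hs : s = 1 ∨ s = -1) (x : Fin 3 → ℝ) (a b : Fin 3) :
    dualContorK s x a b = -s * gmet x a b := by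
  have hpos := one_add_fsq_pos x
  calc dualContorK s x a b
      = s / (2 * (1 + fsq x) ^ 2) * ∑ μ, ∑ ν, crossMatrix (Pi.single a 1) μ ν * eps μ ν b := by
        simp only [dualContorK, sum_mul_ginv, contorK_eq (sq_eq_one_iff.2 hs), dens,
          Finset.mul_sum]
        refine Finset.sum_congr rfl fun μ _ => Finset.sum_congr rfl fun ν _ => ?_
        field_simp
    _ = -s * gmet x a b := by
        rw [sum_crossMatrix_mul_eps, gmet_eq, conformalFactor]
        field_simp
end
end
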